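/- There exist constants C > 0 and y₀ < 0 such that for all y ≤ y₀, | A₄(y) − (1/(4√(2π))) (log|y|/|y|) e^{−2y²} − (1/(4√(2π))) (γ/2 + log 2) e^{−2y²}/|y| | ≤ C e^{−2y²}/y², where γ is the Euler–Mascheroni constant; that is, A₄(y) = (1/(4√(2π))) (log|y|/|y|) e^{−2y²} + (1/(4√(2π))) (γ/2 + log 2) e^{−2y²}/|y| + O(y^{−2} e^{−2y²}) as y → −∞. -/

import Mathlib

open MeasureTheory Real Filter

/-- The error function `erf`. -/
noncomputable def erf (x : ℝ) : ℝ := (2 / Real.sqrt Real.pi) * ∫ t in (0 : ℝ)..x, Real.exp (-t ^ 2)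

/-- The complementary error function `erfc`. -/
noncomputable def erfc (x : ℝ) : ℝ := 1 - erf x

noncomputable def A₁ (y : ℝ) : ℝ :=
  -(1 / (2 * Real.sqrt (2 * Real.pi))) *
    ∫ t in Set.Ioi (0 : ℝ), Real.exp (-2 * (t - y) ^ 2) * erfc t

noncomputable def A₂ (y : ℝ) : ℝ :=
  (1 / Real.sqrt (2 * Real.pi)) *
    ∫ t in Set.Ioi (0 : ℝ),
      Real.exp (-2 * (t - y) ^ 2) * t * (Real.exp (-t ^ 2) / Real.sqrt Real.pi - t * erfc t)

noncomputable def A₃ (y : ℝ) : ℝ :=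
  (1 / 4) * (1 + erf (Real.sqrt 2 * y)) *
    (-(y * Real.exp (-2 * y ^ 2)) / Real.sqrt (2 * Real.pi) +
      (1 / 4 + y ^ 2) * (1 - erf (Real.sqrt 2 * y)))

noncomputable def A₄ (y : ℝ) : ℝ :=
  -(1 / Real.sqrt (2 * Real.pi)) *
    ∫ t₁ in Set.Ioi (0 : ℝ), ∫ t₂ in Set.Ioo (0 : ℝ) t₁,
      (1 / (t₁ - t₂)) *
        (Real.exp (-2 * (t₁ - y) ^ 2) * (erf (t₁ - t₂) + erf (Real.sqrt 2 * (t₂ - y))) +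
          Real.exp (-2 * (t₂ - y) ^ 2) * (erf (t₁ - t₂) - erf (Real.sqrt 2 * (t₁ - y))))

noncomputable def A (y : ℝ) : ℝ := A₁ y + A₂ y + A₃ y + A₄ y

/-!
In the variables `s = t₁ - t₂`, `u = t₂ - y` the domain of `A₄ y` becomes the quadrant `s > 0`,
`u > -y`. For `u ≥ 1` the integrand is `exp (-2u²) (erfc s - exp (-4us)) / s` up to
`O(exp (-2u²) exp (-3us))`: the remaining terms cancel to first order as `s → 0`, because `erf` and
the scaled function `exp (x²) erfc x` are Lipschitz there.

The `s`-integral of the leading term is the Frullani-type integral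
`∫₀^∞ (erfc s - exp (-ls)) / s ds = log l + γ / 2 - log 2` at `l = 4u`. It is the limit as `x → 0⁺`
of the Mellin transform `∫₀^∞ s ^ (x - 1) (erfc s - exp (-ls)) ds`, which is a difference of Gamma
factors with cancelling poles, so `Γ'(1)` and `Γ'(1/2)` produce the constant.

The `u`-integral of `exp (-2u²) (log u + γ / 2 + log 2)` then concentrates at `u = |y|` by Laplace's
method: with `u = |y| + t`, `exp (-2u²) = exp (-2y²) exp (-4|y|t) exp (-2t²)`, and the factor
`exp (-4|y|t)` integrates to `1 / (4|y|)`.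
-/

open Set Topology

section ImproperIntegrals

variable {E : Type*} [NormedAddCommGroup E] [NormedSpace ℝ E]

lemma integral_exp_neg_mul_Ioi_zero {a : ℝ} (ha : 0 < a) :
    ∫ s in Ioi (0 : ℝ), exp (-a * s) = 1 / a := by
  simpa only [mul_zero, exp_zero, neg_div_neg_eq] using integral_exp_mul_Ioi (neg_lt_zero.2 ha) 0

lemma norm_integral_Ioi_sub_integral_Ioi_le_div {f g : ℝ → E} {C a : ℝ} (ha : 0 < a)
    (hf : IntegrableOn f (Ioi 0)) (hg : IntegrableOn g (Ioi 0))
    (hfg : ∀ s > 0, ‖f s - g s‖ ≤ C * exp (-a * s)) :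
    ‖(∫ s in Ioi 0, f s) - ∫ s in Ioi 0, g s‖ ≤ C / a := by
  rw [← integral_sub hf hg]
  calc ‖∫ s in Ioi 0, f s - g s‖ ≤ ∫ s in Ioi 0, C * exp (-a * s) :=
        norm_integral_le_of_norm_le ((exp_neg_integrableOn_Ioi 0 ha).const_mul C)
          ((ae_restrict_mem measurableSet_Ioi).mono hfg)
    _ = C / a := by
        rw [integral_const_mul, integral_exp_neg_mul_Ioi_zero ha, mul_one_div]

lemma rpow_sub_one_le_inv_add_one {s x : ℝ} (hs : 0 < s) (hx₀ : 0 ≤ x) (hx₁ : x ≤ 1) :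
    s ^ (x - 1) ≤ s⁻¹ + 1 := by
  rcases le_total s 1 with h | h
  · have : s ^ (x - 1) ≤ s⁻¹ := by
      rw [← rpow_neg_one]
      exact rpow_le_rpow_of_exponent_ge hs h (by linarith)
    linarith
  · have := rpow_le_one_of_one_le_of_nonpos h (sub_nonpos.2 hx₁)
    linarith [inv_pos.2 hs]

lemma tendsto_integral_rpow_sub_one_smul {h : ℝ → E} (hh : IntegrableOn h (Ioi 0))
    (hh' : IntegrableOn (fun s => s⁻¹ • h s) (Ioi 0)) :
    Tendsto (fun x : ℝ => ∫ s in Ioi (0 : ℝ), s ^ (x - 1) • h s) (𝓝[>] 0)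
      (𝓝 (∫ s in Ioi (0 : ℝ), s⁻¹ • h s)) := by
  refine tendsto_integral_filter_of_dominated_convergence (fun s => ‖s⁻¹ • h s‖ + ‖h s‖)
    (Eventually.of_forall fun x => ?_) ?_ (hh'.norm.add hh.norm) ?_
  · exact (by fun_prop : Measurable fun s : ℝ => s ^ (x - 1)).aestronglyMeasurable.smul
      hh.aestronglyMeasurable
  · filter_upwards [Ioo_mem_nhdsGT one_pos] with x hx
    filter_upwards [ae_restrict_mem measurableSet_Ioi] with s hs
    rw [norm_smul, norm_smul, ← add_one_mul, norm_of_nonneg (rpow_pos_of_pos hs _).le,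
      norm_of_nonneg (inv_pos.2 hs).le]
    gcongr
    exact rpow_sub_one_le_inv_add_one hs hx.1.le hx.2.le
  · filter_upwards [ae_restrict_mem measurableSet_Ioi] with s hs
    have hpow : Tendsto (fun x : ℝ => s ^ (x - 1)) (𝓝[>] 0) (𝓝 (s ^ ((0 : ℝ) - 1))) :=
      ((continuous_const_rpow (ne_of_gt hs)).comp (continuous_sub_right 1)).continuousWithinAt
    rw [zero_sub, rpow_neg_one] at hpow
    exact hpow.smul_const (h s)

lemma integral_Ioi_integral_Ioo_sub_eq {f : ℝ → ℝ → E} {a : ℝ}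
    (hf : IntegrableOn (fun p : ℝ × ℝ => f p.1 p.2) (Ioi 0 ×ˢ Ioi a)) :
    ∫ t₁ in Ioi a, ∫ t₂ in Ioo a t₁, f (t₁ - t₂) t₂ = ∫ t in Ioi a, ∫ s in Ioi 0, f s t := by
  set g := (Ioi (0 : ℝ) ×ˢ Ioi a).indicator fun p : ℝ × ℝ => f p.1 p.2 with hg
  have hg_sheared : Integrable (Function.uncurry fun t₁ t₂ : ℝ => g (t₁ - t₂, t₂))
      ((volume : Measure ℝ).prod volume) :=
    (measurePreserving_sub_prod volume volume).integrable_comp_of_integrable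
      (hf.integrable_indicator (measurableSet_Ioi.prod measurableSet_Ioi))
  have hleft (t₁ : ℝ) : ∫ t₂, g (t₁ - t₂, t₂) =
      (Ioi a).indicator (fun t₁ => ∫ t₂ in Ioo a t₁, f (t₁ - t₂) t₂) t₁ := by
    have hslice : ∫ t₂, g (t₁ - t₂, t₂) = ∫ t₂ in Ioo a t₁, f (t₁ - t₂) t₂ := by
      rw [← integral_indicator measurableSet_Ioo]
      congr with t₂
      simp only [hg, indicator_apply, mem_prod, mem_Ioi, mem_Ioo, sub_pos, and_comm]
    by_cases ht₁ : t₁ ∈ Ioi a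
    · rw [hslice, indicator_of_mem ht₁]
    · rw [hslice, indicator_of_notMem ht₁, Ioo_eq_empty ht₁, setIntegral_empty]
  have hright (t : ℝ) : ∫ s, g (s, t) = (Ioi a).indicator (fun t => ∫ s in Ioi 0, f s t) t := by
    by_cases ht : t ∈ Ioi a
    · rw [indicator_of_mem ht, ← integral_indicator measurableSet_Ioi]
      congr with s
      simp only [hg, indicator_apply, mem_prod, ht, and_true]
    · simp only [hg, indicator_apply, mem_prod, ht, and_false, if_false, integral_zero]
  calc ∫ t₁ in Ioi a, ∫ t₂ in Ioo a t₁, f (t₁ - t₂) t₂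
      = ∫ t₁, ∫ t₂, g (t₁ - t₂, t₂) := by
        rw [← integral_indicator measurableSet_Ioi]
        simp only [hleft]
    _ = ∫ t, ∫ t₁, g (t₁ - t, t) := integral_integral_swap hg_sheared
    _ = ∫ t, ∫ s, g (s, t) := by
        congr with t
        exact integral_sub_right_eq_self (fun s => g (s, t)) t
    _ = ∫ t in Ioi a, ∫ s in Ioi 0, f s t := by
        rw [← integral_indicator measurableSet_Ioi]
        simp only [hright]

end ImproperIntegrals

section ErrorFunction

lemma hasDerivAt_erf (x : ℝ) : HasDerivAt erf (2 / √π * exp (-x ^ 2)) x :=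
  ((by fun_prop : Continuous fun t : ℝ => exp (-t ^ 2)).integral_hasStrictDerivAt 0
    x).hasDerivAt.const_mul _

lemma hasDerivAt_erfc (x : ℝ) : HasDerivAt erfc (-(2 / √π * exp (-x ^ 2))) x :=
  (hasDerivAt_erf x).const_sub 1

@[fun_prop]
lemma continuous_erf : Continuous erf :=
  continuous_iff_continuousAt.2 fun x => (hasDerivAt_erf x).continuousAt

@[fun_prop]
lemma continuous_erfc : Continuous erfc :=
  continuous_const.sub continuous_erf

lemma integrable_exp_neg_sq : Integrable fun v : ℝ => exp (-v ^ 2) := by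
  simpa only [neg_one_mul] using integrable_exp_neg_mul_sq one_pos

lemma two_div_sqrt_pi_mul_integral_exp_neg_sq :
    2 / √π * ∫ v in Ioi (0 : ℝ), exp (-v ^ 2) = 1 := by
  have hgauss : ∫ v in Ioi (0 : ℝ), exp (-v ^ 2) = √π / 2 := by
    simpa only [neg_one_mul, div_one] using integral_gaussian_Ioi 1
  have : √π ≠ 0 := by positivity
  rw [hgauss]
  field_simp

lemma tendsto_erf_atTop : Tendsto erf atTop (𝓝 1) := by
  rw [← two_div_sqrt_pi_mul_integral_exp_neg_sq]
  exact (intervalIntegral_tendsto_integral_Ioi 0 integrable_exp_neg_sq.integrableOn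
    tendsto_id).const_mul _

lemma erfc_eq_integral_Ioi (x : ℝ) :
    erfc x = 2 / √π * ∫ v in Ioi (0 : ℝ), exp (-(x + v) ^ 2) := by
  have hderiv : ∀ v ∈ Ici (0 : ℝ),
      HasDerivAt (fun v => erf (x + v)) (2 / √π * exp (-(x + v) ^ 2)) v :=
    fun v _ => (hasDerivAt_erf (x + v)).comp_const_add x v
  have hlim : Tendsto (fun v => erf (x + v)) atTop (𝓝 1) :=
    tendsto_erf_atTop.comp (tendsto_atTop_add_const_left _ _ tendsto_id)
  rw [← integral_const_mul, integral_Ioi_of_hasDerivAt_of_tendsto' hderiv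
    ((integrable_exp_neg_sq.comp_add_left x).const_mul _).integrableOn hlim, add_zero, erfc]

lemma erf_nonneg {x : ℝ} (hx : 0 ≤ x) : 0 ≤ erf x :=
  mul_nonneg (by positivity)
    (intervalIntegral.integral_nonneg hx fun t _ => (exp_pos (-t ^ 2)).le)

lemma erf_le_two_mul {x : ℝ} (hx : 0 ≤ x) : erf x ≤ 2 * x := by
  have hint : ∫ t in (0 : ℝ)..x, exp (-t ^ 2) ≤ x := by
    calc ∫ t in (0 : ℝ)..x, exp (-t ^ 2) ≤ ∫ _ in (0 : ℝ)..x, (1 : ℝ) :=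
          intervalIntegral.integral_mono_on hx
            ((by fun_prop : Continuous fun t : ℝ => exp (-t ^ 2)).intervalIntegrable _ _)
            (by simp) fun t _ => exp_le_one_iff.2 (neg_nonpos.2 (sq_nonneg t))
      _ = x := by simp
  have hcoeff : 2 / √π ≤ 2 :=
    div_le_self zero_le_two (one_le_sqrt.2 (by linarith [pi_gt_three]))
  calc erf x ≤ 2 / √π * x := mul_le_mul_of_nonneg_left hint (by positivity)
    _ ≤ 2 * x := mul_le_mul_of_nonneg_right hcoeff hx

/-- The scaled complementary error function `erfcx x = exp (x²) erfc x`. Unlike `erfc` it varies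
slowly, so differences of Gaussian tails at nearby points are controlled through it. -/
noncomputable def erfcx (x : ℝ) : ℝ := exp (x ^ 2) * erfc x

lemma erfc_eq_exp_mul_erfcx (x : ℝ) : erfc x = exp (-x ^ 2) * erfcx x := by
  rw [erfcx, ← mul_assoc, ← exp_add, neg_add_cancel, exp_zero, one_mul]

lemma exp_neg_sq_sub_eq (x v : ℝ) :
    exp (-v ^ 2 - 2 * x * v) = exp (x ^ 2) * exp (-(x + v) ^ 2) := by
  rw [← exp_add]
  congr 1
  ring

lemma integrable_exp_neg_sq_sub (x : ℝ) : Integrable fun v : ℝ => exp (-v ^ 2 - 2 * x * v) := by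
  simpa only [exp_neg_sq_sub_eq] using (integrable_exp_neg_sq.comp_add_left x).const_mul _

lemma erfcx_eq_integral_Ioi (x : ℝ) :
    erfcx x = 2 / √π * ∫ v in Ioi (0 : ℝ), exp (-v ^ 2 - 2 * x * v) := by
  simp only [exp_neg_sq_sub_eq, integral_const_mul]
  rw [erfcx, erfc_eq_integral_Ioi]
  ring

lemma erfcx_zero : erfcx 0 = 1 := by
  simp [erfcx, erfc, erf]

lemma erfcx_nonneg (x : ℝ) : 0 ≤ erfcx x := by
  rw [erfcx_eq_integral_Ioi]
  exact mul_nonneg (by positivity) (integral_nonneg fun v => (exp_pos _).le)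

lemma antitone_erfcx : Antitone erfcx := by
  intro a b hab
  rw [erfcx_eq_integral_Ioi, erfcx_eq_integral_Ioi]
  refine mul_le_mul_of_nonneg_left ?_ (by positivity)
  refine setIntegral_mono_on (integrable_exp_neg_sq_sub b).integrableOn
    (integrable_exp_neg_sq_sub a).integrableOn measurableSet_Ioi fun v hv => ?_
  have : 0 ≤ v := (mem_Ioi.1 hv).le
  gcongr

lemma exp_neg_sq_sub_sub_exp_neg_sq_sub_le {a b : ℝ} (ha : 0 < a) (hab : a ≤ b) (v : ℝ) :
    exp (-v ^ 2 - 2 * a * v) - exp (-v ^ 2 - 2 * b * v) ≤ (b - a) / a * exp (-v ^ 2) := by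
  have hfactor (c : ℝ) : exp (-v ^ 2 - 2 * c * v) = exp (-v ^ 2) * exp (-(2 * c * v)) := by
    rw [← exp_add, sub_eq_add_neg]
  have hconvex : exp (-(2 * a * v)) - exp (-(2 * b * v)) ≤
      exp (-(2 * a * v)) * (2 * (b - a) * v) := by
    have hsplit : exp (-(2 * b * v)) = exp (-(2 * a * v)) * exp (-(2 * (b - a) * v)) := by
      rw [← exp_add]
      congr 1
      ring
    rw [hsplit]
    nlinarith [exp_pos (-(2 * a * v)), one_sub_le_exp_neg (2 * (b - a) * v)]
  have hpeak : 2 * a * v * exp (-(2 * a * v)) ≤ 1 :=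
    (mul_exp_neg_le_exp_neg_one _).trans (exp_le_one_iff.2 (by norm_num))
  have : 0 ≤ (b - a) / a := div_nonneg (sub_nonneg.2 hab) ha.le
  calc exp (-v ^ 2 - 2 * a * v) - exp (-v ^ 2 - 2 * b * v)
      = exp (-v ^ 2) * (exp (-(2 * a * v)) - exp (-(2 * b * v))) := by
        rw [hfactor, hfactor, mul_sub]
    _ ≤ exp (-v ^ 2) * (exp (-(2 * a * v)) * (2 * (b - a) * v)) := by gcongr
    _ = exp (-v ^ 2) * ((b - a) / a * (2 * a * v * exp (-(2 * a * v)))) := by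
        field_simp
    _ ≤ exp (-v ^ 2) * ((b - a) / a * 1) := by gcongr
    _ = (b - a) / a * exp (-v ^ 2) := by ring

lemma erfcx_sub_erfcx_le {a b : ℝ} (ha : 0 < a) (hab : a ≤ b) :
    erfcx a - erfcx b ≤ (b - a) / a := by
  rw [erfcx_eq_integral_Ioi, erfcx_eq_integral_Ioi, ← mul_sub,
    ← integral_sub (integrable_exp_neg_sq_sub a).integrableOn
      (integrable_exp_neg_sq_sub b).integrableOn]
  calc 2 / √π * ∫ v in Ioi (0 : ℝ), exp (-v ^ 2 - 2 * a * v) - exp (-v ^ 2 - 2 * b * v)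
      ≤ 2 / √π * ∫ v in Ioi (0 : ℝ), (b - a) / a * exp (-v ^ 2) := by
        refine mul_le_mul_of_nonneg_left ?_ (by positivity)
        exact setIntegral_mono_on
          ((integrable_exp_neg_sq_sub a).sub (integrable_exp_neg_sq_sub b)).integrableOn
          (integrable_exp_neg_sq.const_mul _).integrableOn measurableSet_Ioi
          fun v _ => exp_neg_sq_sub_sub_exp_neg_sq_sub_le ha hab v
    _ = (b - a) / a * (2 / √π * ∫ v in Ioi (0 : ℝ), exp (-v ^ 2)) := by
        rw [integral_const_mul]
        ring
    _ = (b - a) / a := by rw [two_div_sqrt_pi_mul_integral_exp_neg_sq, mul_one]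

lemma erfc_nonneg (x : ℝ) : 0 ≤ erfc x := by
  rw [erfc_eq_exp_mul_erfcx]
  exact mul_nonneg (exp_pos _).le (erfcx_nonneg x)

lemma erfc_le_exp_neg_sq {x : ℝ} (hx : 0 ≤ x) : erfc x ≤ exp (-x ^ 2) := by
  rw [erfc_eq_exp_mul_erfcx]
  exact mul_le_of_le_one_right (exp_pos _).le (erfcx_zero ▸ antitone_erfcx hx)

end ErrorFunction

section Mellin

lemma integrableOn_rpow_mul_erfc {x : ℝ} (hx : 0 < x) :
    IntegrableOn (fun s : ℝ => s ^ (x - 1) * erfc s) (Ioi 0) := by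
  refine Integrable.mono' (integrableOn_rpow_mul_exp_neg_mul_sq one_pos (by linarith : -1 < x - 1))
    (by fun_prop : Measurable fun s : ℝ => s ^ (x - 1) * erfc s).aestronglyMeasurable ?_
  filter_upwards [ae_restrict_mem measurableSet_Ioi] with s hs
  have hpow : 0 ≤ s ^ (x - 1) := (rpow_pos_of_pos hs _).le
  rw [norm_of_nonneg (mul_nonneg hpow (erfc_nonneg s)), neg_one_mul]
  exact mul_le_mul_of_nonneg_left (erfc_le_exp_neg_sq (mem_Ioi.1 hs).le) hpow

lemma tendsto_erfc_mul_rpow_atTop (x : ℝ) : Tendsto (fun s => erfc s * s ^ x) atTop (𝓝 0) := by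
  refine squeeze_zero' ?_ ?_ (tendsto_rpow_mul_exp_neg_mul_atTop_nhds_zero x 1 one_pos)
  · filter_upwards [eventually_ge_atTop 0] with s hs
    exact mul_nonneg (erfc_nonneg s) (rpow_nonneg hs x)
  · filter_upwards [eventually_ge_atTop 1] with s hs
    have hs₀ : 0 ≤ s := by linarith
    have hexp : erfc s ≤ exp (-1 * s) :=
      (erfc_le_exp_neg_sq hs₀).trans (exp_le_exp.2 (by nlinarith))
    rw [mul_comm]
    exact mul_le_mul_of_nonneg_left hexp (rpow_nonneg hs₀ x)

lemma integral_rpow_mul_erfc {x : ℝ} (hx : 0 < x) :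
    ∫ s in Ioi (0 : ℝ), s ^ (x - 1) * erfc s = Gamma ((x + 1) / 2) / √π / x := by
  have hpow : ∀ s ∈ Ioi (0 : ℝ), HasDerivAt (fun s : ℝ => s ^ x / x) (s ^ (x - 1)) s := by
    intro s hs
    simpa only [mul_div_cancel_left₀ _ hx.ne'] using
      (hasDerivAt_rpow_const (p := x) (Or.inl (ne_of_gt hs))).div_const x
  have hint : IntegrableOn (erfc * fun s : ℝ => s ^ (x - 1)) (Ioi 0) :=
    (integrableOn_rpow_mul_erfc hx).congr_fun (fun s _ => mul_comm _ _) measurableSet_Ioi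
  have hderiv (s : ℝ) : -(2 / √π * exp (-s ^ 2)) * (s ^ x / x) =
      -(2 / √π) / x * (s ^ x * exp (-s ^ 2)) := by ring
  have hint' : IntegrableOn ((fun s : ℝ => -(2 / √π * exp (-s ^ 2))) * fun s => s ^ x / x)
      (Ioi 0) := by
    have := integrableOn_rpow_mul_exp_neg_mul_sq one_pos (by linarith : -1 < x)
    simp only [neg_one_mul] at this
    exact IntegrableOn.congr_fun (this.const_mul (-(2 / √π) / x)) (fun s _ => (hderiv s).symm)
      measurableSet_Ioi
  have hzero : Tendsto (erfc * fun s : ℝ => s ^ x / x) (𝓝[>] 0) (𝓝 0) := by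
    have hcont : Continuous (erfc * fun s : ℝ => s ^ x / x) :=
      continuous_erfc.mul ((continuous_rpow_const hx.le).div_const x)
    simpa [zero_rpow hx.ne'] using (hcont.tendsto 0).mono_left nhdsWithin_le_nhds
  have htop : Tendsto (erfc * fun s : ℝ => s ^ x / x) atTop (𝓝 0) := by
    simpa only [Pi.mul_def, mul_div_assoc, zero_div] using
      (tendsto_erfc_mul_rpow_atTop x).div_const x
  have hparts := integral_Ioi_mul_deriv_eq_deriv_mul (fun s _ => hasDerivAt_erfc s) hpow
    hint hint' hzero htop
  have hgauss : ∫ s in Ioi (0 : ℝ), s ^ x * exp (-s ^ 2) = 1 / 2 * Gamma ((x + 1) / 2) := by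
    simpa only [rpow_two] using integral_rpow_mul_exp_neg_rpow two_pos (by linarith : -1 < x)
  simp only [mul_comm _ (erfc _)]
  rw [hparts]
  simp only [hderiv, integral_const_mul, hgauss]
  ring

lemma hasDerivAt_Gamma_add_one_div_two_div_sqrt_pi :
    HasDerivAt (fun x : ℝ => Gamma ((x + 1) / 2) / √π)
      (-(eulerMascheroniConstant / 2 + log 2)) 0 := by
  have hinner : HasDerivAt (fun x : ℝ => (x + 1) / 2) (1 / 2) 0 :=
    ((hasDerivAt_id (0 : ℝ)).add_const 1).div_const 2
  have houter : HasDerivAt Gamma (-√π * (eulerMascheroniConstant + 2 * log 2)) ((0 + 1) / 2) := by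
    rw [zero_add]
    exact hasDerivAt_Gamma_one_half
  have : √π ≠ 0 := by positivity
  convert! (houter.comp (0 : ℝ) hinner).div_const √π using 1
  field_simp

lemma hasDerivAt_rpow_mul_Gamma_add_one {l : ℝ} (hl : 0 < l) :
    HasDerivAt (fun x : ℝ => (1 / l) ^ x * Gamma (x + 1))
      (-(log l + eulerMascheroniConstant)) 0 := by
  have hpow : HasDerivAt (fun x : ℝ => (1 / l) ^ x) ((1 / l) ^ (0 : ℝ) * log (1 / l)) 0 :=
    (hasStrictDerivAt_const_rpow (by positivity) 0).hasDerivAt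
  have hGamma : HasDerivAt (fun x : ℝ => Gamma (x + 1)) (-eulerMascheroniConstant) 0 := by
    refine HasDerivAt.comp_add_const 0 1 ?_
    rw [zero_add]
    exact hasDerivAt_Gamma_one
  convert! hpow.mul hGamma using 1
  simp only [rpow_zero, one_div, log_inv, zero_add, Gamma_one]
  ring

/-- Both terms have the form `f x / x` with `f 0 = 1`, so the limit is a difference of
derivatives at `0`. -/
lemma tendsto_Gamma_div_sub_rpow_mul_Gamma {l : ℝ} (hl : 0 < l) :
    Tendsto (fun x : ℝ => Gamma ((x + 1) / 2) / √π / x - (1 / l) ^ x * Gamma x) (𝓝[>] 0)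
      (𝓝 (log l + eulerMascheroniConstant / 2 - log 2)) := by
  have hslope := (hasDerivAt_Gamma_add_one_div_two_div_sqrt_pi.sub
    (hasDerivAt_rpow_mul_Gamma_add_one hl)).tendsto_slope_zero_right
  have hlimit : -(eulerMascheroniConstant / 2 + log 2) - -(log l + eulerMascheroniConstant) =
      log l + eulerMascheroniConstant / 2 - log 2 := by ring
  rw [hlimit] at hslope
  refine hslope.congr' ?_
  filter_upwards [self_mem_nhdsWithin] with x hx
  have hx₀ : x ≠ 0 := ne_of_gt hx
  have hGamma_half : Gamma ((0 + 1) / 2) / √π = 1 := by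
    rw [zero_add, Gamma_one_half_eq, div_self (by positivity)]
  simp only [Pi.sub_apply, smul_eq_mul, zero_add, rpow_zero, Gamma_one] at hGamma_half ⊢
  rw [hGamma_half, Gamma_add_one hx₀]
  field_simp
  ring

lemma integrableOn_rpow_mul_exp_neg_mul {l x : ℝ} (hl : 0 < l) (hx : 0 < x) :
    IntegrableOn (fun s : ℝ => s ^ (x - 1) * exp (-l * s)) (Ioi 0) := by
  simpa only [rpow_one] using
    integrableOn_rpow_mul_exp_neg_mul_rpow (by linarith : -1 < x - 1) one_pos hl

lemma integral_rpow_mul_erfc_sub_exp {l x : ℝ} (hl : 0 < l) (hx : 0 < x) :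
    ∫ s in Ioi (0 : ℝ), s ^ (x - 1) * (erfc s - exp (-l * s)) =
      Gamma ((x + 1) / 2) / √π / x - (1 / l) ^ x * Gamma x := by
  simp only [mul_sub]
  rw [integral_sub (integrableOn_rpow_mul_erfc hx) (integrableOn_rpow_mul_exp_neg_mul hl hx),
    integral_rpow_mul_erfc hx]
  simp only [neg_mul, integral_rpow_mul_exp_neg_mul_Ioi hx hl]

lemma abs_inv_mul_erfc_sub_exp_le {l s : ℝ} (hl : 0 < l) (hs : 0 < s) :
    |s⁻¹ * (erfc s - exp (-l * s))| ≤ (2 + l) * exp (min l 1 * (1 - s)) := by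
  have herfc_nonneg := erfc_nonneg s
  have hexp_pos := exp_pos (-l * s)
  rw [abs_mul, abs_of_pos (inv_pos.2 hs), inv_mul_le_iff₀ hs]
  have hmin : 0 < min l 1 := lt_min hl one_pos
  rcases le_total s 1 with hs₁ | hs₁
  · have herfc : erfc s = 1 - erf s := rfl
    have hlinear : |erfc s - exp (-l * s)| ≤ s * (2 + l) := by
      have hexp_le : exp (-l * s) ≤ 1 := exp_le_one_iff.2 (by nlinarith)
      have hexp_ge := add_one_le_exp (-l * s)
      rw [abs_le]
      constructor <;> nlinarith [erf_nonneg hs.le, erf_le_two_mul hs.le]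
    have : 1 ≤ exp (min l 1 * (1 - s)) := one_le_exp (mul_nonneg hmin.le (sub_nonneg.2 hs₁))
    calc |erfc s - exp (-l * s)| ≤ s * ((2 + l) * 1) := by rwa [mul_one]
      _ ≤ s * ((2 + l) * exp (min l 1 * (1 - s))) := by gcongr
  · have hexp_le : exp (-l * s) ≤ exp (min l 1 * (1 - s)) :=
      exp_le_exp.2 (by nlinarith [min_le_left l 1])
    have herfc_le : erfc s ≤ exp (min l 1 * (1 - s)) :=
      (erfc_le_exp_neg_sq hs.le).trans (exp_le_exp.2 (by nlinarith [min_le_right l 1]))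
    have hcoeff : 1 ≤ s * (2 + l) := by nlinarith
    calc |erfc s - exp (-l * s)| ≤ exp (min l 1 * (1 - s)) := by
          rw [abs_le]
          constructor <;> linarith
      _ ≤ s * (2 + l) * exp (min l 1 * (1 - s)) := le_mul_of_one_le_left (exp_pos _).le hcoeff
      _ = s * ((2 + l) * exp (min l 1 * (1 - s))) := mul_assoc _ _ _

lemma integrableOn_inv_mul_erfc_sub_exp {l : ℝ} (hl : 0 < l) :
    IntegrableOn (fun s => s⁻¹ * (erfc s - exp (-l * s))) (Ioi 0) := by
  have hdom : IntegrableOn (fun s : ℝ => (2 + l) * exp (min l 1 * (1 - s))) (Ioi 0) := by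
    refine IntegrableOn.congr_fun ((exp_neg_integrableOn_Ioi 0 (lt_min hl one_pos)).const_mul
      ((2 + l) * exp (min l 1))) (fun s _ => ?_) measurableSet_Ioi
    simp only [mul_assoc, ← exp_add]
    ring_nf
  refine Integrable.mono' hdom
    (by fun_prop : Measurable fun s => s⁻¹ * (erfc s - exp (-l * s))).aestronglyMeasurable ?_
  filter_upwards [ae_restrict_mem measurableSet_Ioi] with s hs
  exact abs_inv_mul_erfc_sub_exp_le hl hs

theorem integral_inv_mul_erfc_sub_exp {l : ℝ} (hl : 0 < l) :
    ∫ s in Ioi (0 : ℝ), s⁻¹ * (erfc s - exp (-l * s)) =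
      log l + eulerMascheroniConstant / 2 - log 2 := by
  have hint : IntegrableOn (fun s => erfc s - exp (-l * s)) (Ioi 0) := by
    have herfc := integrableOn_rpow_mul_erfc one_pos
    simp only [sub_self, rpow_zero, one_mul] at herfc
    exact herfc.sub (exp_neg_integrableOn_Ioi 0 hl)
  refine tendsto_nhds_unique
    (tendsto_integral_rpow_sub_one_smul hint (integrableOn_inv_mul_erfc_sub_exp hl))
    ((tendsto_Gamma_div_sub_rpow_mul_Gamma hl).congr' ?_)
  filter_upwards [self_mem_nhdsWithin] with x hx
  exact (integral_rpow_mul_erfc_sub_exp hl hx).symm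

end Mellin

section GapKernel

/-- The integrand of `A₄ y`, with the sign of the prefactor absorbed, as a function of the gap
`s = t₁ - t₂` and of `u = t₂ - y`. Its value at `s = 0` is the junk value `0`. -/
noncomputable def gapKernel (s u : ℝ) : ℝ :=
  (exp (-2 * u ^ 2) * (erf (√2 * (u + s)) - erf s) -
    exp (-2 * (u + s) ^ 2) * (erf (√2 * u) + erf s)) / s

lemma exp_neg_two_mul_add_sq (u s : ℝ) :
    exp (-2 * (u + s) ^ 2) = exp (-2 * u ^ 2) * exp (-(4 * u) * s) * exp (-2 * s ^ 2) := by
  simp only [← exp_add]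
  congr 1
  ring

lemma erf_sqrt_two_mul (u : ℝ) : erf (√2 * u) = 1 - exp (-2 * u ^ 2) * erfcx (√2 * u) := by
  have hsq : -(√2 * u) ^ 2 = -2 * u ^ 2 := by
    rw [mul_pow, sq_sqrt zero_le_two]
    ring
  rw [← hsq, ← erfc_eq_exp_mul_erfcx, erfc, sub_sub_cancel]

lemma gapKernel_sub_eq (s u : ℝ) :
    gapKernel s u - exp (-2 * u ^ 2) * (s⁻¹ * (erfc s - exp (-(4 * u) * s))) =
      exp (-2 * u ^ 2) * exp (-(4 * u) * s) * (1 - exp (-2 * s ^ 2) - exp (-2 * s ^ 2) * erf s +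
        exp (-2 * s ^ 2) * (exp (-2 * u ^ 2) * (erfcx (√2 * u) - erfcx (√2 * (u + s))))) / s := by
  rw [gapKernel, erf_sqrt_two_mul, erf_sqrt_two_mul, erfc, exp_neg_two_mul_add_sq]
  ring

lemma exp_mul_erfcx_sub_erfcx_mem_Icc {s u : ℝ} (hu : 1 ≤ u) (hs : 0 ≤ s) :
    exp (-2 * u ^ 2) * (erfcx (√2 * u) - erfcx (√2 * (u + s))) ∈ Icc 0 s := by
  have hle : √2 * u ≤ √2 * (u + s) := by gcongr; linarith
  have hanti : 0 ≤ erfcx (√2 * u) - erfcx (√2 * (u + s)) := sub_nonneg.2 (antitone_erfcx hle)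
  have hexp : exp (-2 * u ^ 2) ≤ 1 := exp_le_one_iff.2 (by nlinarith)
  refine ⟨mul_nonneg (exp_pos _).le hanti, ?_⟩
  calc exp (-2 * u ^ 2) * (erfcx (√2 * u) - erfcx (√2 * (u + s)))
      ≤ erfcx (√2 * u) - erfcx (√2 * (u + s)) := mul_le_of_le_one_left hanti hexp
    _ ≤ (√2 * (u + s) - √2 * u) / (√2 * u) := erfcx_sub_erfcx_le (by positivity) hle
    _ = s / u := by field_simp; ring
    _ ≤ s := div_le_self hs hu

lemma exp_neg_four_mul_mul_one_add_le {s u : ℝ} (hu : 1 ≤ u) (hs : 0 ≤ s) :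
    exp (-(4 * u) * s) * (1 + s) ≤ exp (-(3 * u) * s) := by
  calc exp (-(4 * u) * s) * (1 + s) ≤ exp (-(4 * u) * s) * exp s := by
        gcongr
        linarith [add_one_le_exp s]
    _ = exp (-(4 * u) * s + s) := (exp_add _ _).symm
    _ ≤ exp (-(3 * u) * s) := exp_le_exp.2 (by nlinarith)

lemma abs_gapKernel_sub_le {s u : ℝ} (hu : 1 ≤ u) (hs : 0 < s) :
    |gapKernel s u - exp (-2 * u ^ 2) * (s⁻¹ * (erfc s - exp (-(4 * u) * s)))| ≤
      2 * exp (-2 * u ^ 2) * exp (-(3 * u) * s) := by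
  obtain ⟨hd₀, hd₁⟩ := exp_mul_erfcx_sub_erfcx_mem_Icc hu hs.le
  rw [gapKernel_sub_eq]
  set d := exp (-2 * u ^ 2) * (erfcx (√2 * u) - erfcx (√2 * (u + s)))
  set g := exp (-2 * s ^ 2)
  have hg₀ : 0 < g := exp_pos _
  have hg₁ : g ≤ 1 := exp_le_one_iff.2 (by nlinarith)
  have hbracket : |1 - g - g * erf s + g * d| ≤ 2 * s * (1 + s) := by
    have hg₂ : 1 - g ≤ 2 * s ^ 2 := by linarith [add_one_le_exp (-2 * s ^ 2)]
    have herf₀ : 0 ≤ g * erf s := mul_nonneg hg₀.le (erf_nonneg hs.le)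
    have herf₁ : g * erf s ≤ 2 * s :=
      (mul_le_of_le_one_left (erf_nonneg hs.le) hg₁).trans (erf_le_two_mul hs.le)
    have hgd₀ : 0 ≤ g * d := mul_nonneg hg₀.le hd₀
    have hgd₁ : g * d ≤ s := (mul_le_of_le_one_left hd₀ hg₁).trans hd₁
    rw [abs_le]
    constructor <;> nlinarith
  rw [abs_div, abs_of_pos hs, div_le_iff₀ hs, abs_mul, abs_of_pos (by positivity)]
  calc exp (-2 * u ^ 2) * exp (-(4 * u) * s) * |1 - g - g * erf s + g * d|
      ≤ exp (-2 * u ^ 2) * exp (-(4 * u) * s) * (2 * s * (1 + s)) := by gcongr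
    _ = 2 * exp (-2 * u ^ 2) * (exp (-(4 * u) * s) * (1 + s)) * s := by ring
    _ ≤ 2 * exp (-2 * u ^ 2) * exp (-(3 * u) * s) * s := by
        gcongr
        exact exp_neg_four_mul_mul_one_add_le hu hs.le

lemma measurable_gapKernel : Measurable fun p : ℝ × ℝ => gapKernel p.1 p.2 := by
  unfold gapKernel
  fun_prop

lemma abs_gapKernel_le {s u : ℝ} (hu : 1 ≤ u) (hs : 0 < s) :
    |gapKernel s u| ≤ 4 * exp 1 * (exp (-s) * exp (-u)) := by
  have happrox := abs_gapKernel_sub_le hu hs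
  have hmain := abs_inv_mul_erfc_sub_exp_le (l := 4 * u) (by linarith) hs
  rw [min_eq_right (by linarith), one_mul] at hmain
  have herror : exp (-(3 * u) * s) ≤ exp (1 - s) := exp_le_exp.2 (by nlinarith)
  have hu_exp : (1 + u) * exp (-2 * u ^ 2) ≤ exp (-u) := by
    calc (1 + u) * exp (-2 * u ^ 2) ≤ exp u * exp (-2 * u ^ 2) := by
          gcongr
          linarith [add_one_le_exp u]
      _ = exp (u + -2 * u ^ 2) := (exp_add _ _).symm
      _ ≤ exp (-u) := exp_le_exp.2 (by nlinarith)
  set e := exp (-2 * u ^ 2)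
  set h := s⁻¹ * (erfc s - exp (-(4 * u) * s))
  calc |gapKernel s u| = |(gapKernel s u - e * h) + e * h| := by rw [sub_add_cancel]
    _ ≤ |gapKernel s u - e * h| + |e * h| := abs_add_le _ _
    _ ≤ 2 * e * exp (1 - s) + e * ((2 + 4 * u) * exp (1 - s)) := by
        rw [abs_mul e, abs_of_pos (exp_pos _ : 0 < e)]
        gcongr
        exact happrox.trans (by gcongr)
    _ = 4 * ((1 + u) * e) * exp (1 - s) := by ring
    _ ≤ 4 * exp (-u) * exp (1 - s) := by gcongr
    _ = 4 * exp 1 * (exp (-s) * exp (-u)) := by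
        rw [sub_eq_add_neg, exp_add]
        ring

lemma integrableOn_gapKernel {u : ℝ} (hu : 1 ≤ u) :
    IntegrableOn (fun s => gapKernel s u) (Ioi 0) := by
  refine Integrable.mono' (((integrableOn_exp_neg_Ioi 0).mul_const (exp (-u))).const_mul
    (4 * exp 1)) (measurable_gapKernel.comp measurable_prodMk_right).aestronglyMeasurable ?_
  filter_upwards [ae_restrict_mem measurableSet_Ioi] with s hs
  exact abs_gapKernel_le hu hs

lemma integrableOn_gapKernel_prod {Y : ℝ} (hY : 1 ≤ Y) :
    IntegrableOn (fun p : ℝ × ℝ => gapKernel p.1 (Y + p.2)) (Ioi 0 ×ˢ Ioi 0) := by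
  have hdom : IntegrableOn (fun p : ℝ × ℝ => 4 * exp 1 * (exp (-p.1) * exp (-p.2)))
      (Ioi 0 ×ˢ Ioi 0) := by
    rw [IntegrableOn, Measure.volume_eq_prod, ← Measure.prod_restrict]
    exact ((integrableOn_exp_neg_Ioi 0).mul_prod (integrableOn_exp_neg_Ioi 0)).const_mul _
  refine Integrable.mono' hdom (measurable_gapKernel.comp
    (by fun_prop : Measurable fun p : ℝ × ℝ => (p.1, Y + p.2))).aestronglyMeasurable ?_
  filter_upwards [ae_restrict_mem (measurableSet_Ioi.prod measurableSet_Ioi)] with p ⟨hs, ht⟩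
  have ht₀ : 0 < p.2 := ht
  calc ‖gapKernel p.1 (Y + p.2)‖ ≤ 4 * exp 1 * (exp (-p.1) * exp (-(Y + p.2))) :=
        abs_gapKernel_le (by linarith) hs
    _ ≤ 4 * exp 1 * (exp (-p.1) * exp (-p.2)) := by
        gcongr
        linarith

lemma abs_integral_gapKernel_sub_le {u : ℝ} (hu : 1 ≤ u) :
    |(∫ s in Ioi 0, gapKernel s u) -
        exp (-2 * u ^ 2) * (log u + (eulerMascheroniConstant / 2 + log 2))| ≤
      exp (-2 * u ^ 2) / u := by
  have hlog : log (4 * u) = 2 * log 2 + log u := by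
    rw [log_mul (by norm_num) (by linarith), show (4 : ℝ) = 2 ^ 2 by norm_num, log_pow]
    norm_num
  have hmain : ∫ s in Ioi 0, exp (-2 * u ^ 2) * (s⁻¹ * (erfc s - exp (-(4 * u) * s))) =
      exp (-2 * u ^ 2) * (log u + (eulerMascheroniConstant / 2 + log 2)) := by
    rw [integral_const_mul, integral_inv_mul_erfc_sub_exp (by linarith), hlog]
    ring
  rw [← hmain]
  calc _ ≤ 2 * exp (-2 * u ^ 2) / (3 * u) :=
        norm_integral_Ioi_sub_integral_Ioi_le_div (by linarith) (integrableOn_gapKernel hu)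
          ((integrableOn_inv_mul_erfc_sub_exp (by linarith)).const_mul _)
          fun s hs => abs_gapKernel_sub_le hu hs
    _ = 2 / 3 * (exp (-2 * u ^ 2) / u) := by field_simp
    _ ≤ exp (-2 * u ^ 2) / u := mul_le_of_le_one_left (by positivity) (by norm_num)

lemma A₄_eq_integral_gapKernel {y : ℝ} (hy : y ≤ -1) :
    A₄ y = 1 / √(2 * π) * ∫ t in Ioi 0, ∫ s in Ioi 0, gapKernel s (-y + t) := by
  rw [← integral_Ioi_integral_Ioo_sub_eq (f := fun s t => gapKernel s (-y + t))
    (integrableOn_gapKernel_prod (le_neg_of_le_neg hy)), A₄, neg_mul, ← mul_neg]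
  simp only [← integral_neg]
  congr! 5 with t₁ t₂
  rw [gapKernel, show -y + t₂ + (t₁ - t₂) = t₁ - y by ring, show -y + t₂ = t₂ - y by ring]
  ring

end GapKernel

section Laplace

lemma log_add_sub_log_le_div {Y t : ℝ} (hY : 0 < Y) (ht : 0 ≤ t) :
    log (Y + t) - log Y ≤ t / Y := by
  have hratio : (Y + t) / Y = 1 + t / Y := by field_simp
  rw [← log_div (by linarith) hY.ne', hratio]
  linarith [log_le_sub_one_of_pos (by positivity : 0 < 1 + t / Y)]

lemma abs_exp_mul_log_add_sub_le {Y t : ℝ} (c : ℝ) (hY : 1 ≤ Y) (ht : 0 ≤ t) :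
    |exp (-2 * t ^ 2) * (log (Y + t) + c) - (log Y + c)| ≤ (5 + 4 * |c|) / Y * exp (Y * t) := by
  have hY₀ : 0 < Y := by linarith
  set g := exp (-2 * t ^ 2)
  have hg₀ : 0 < g := exp_pos _
  have hg₁ : g ≤ 1 := exp_le_one_iff.2 (by nlinarith)
  have hg₂ : 1 - g ≤ 2 * t ^ 2 := by linarith [add_one_le_exp (-2 * t ^ 2)]
  have hlog₀ : 0 ≤ log (Y + t) - log Y := sub_nonneg.2 (log_le_log hY₀ (by linarith))
  have hlogY : |log Y + c| ≤ (1 + |c|) * Y := by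
    have : |log Y| ≤ Y := by
      rw [abs_of_nonneg (log_nonneg hY)]
      exact log_le_self hY₀.le
    nlinarith [abs_add_le (log Y) c, abs_nonneg c]
  have hlinear : t ≤ exp (Y * t) := by nlinarith [add_one_le_exp (Y * t)]
  have hquadratic : (Y * t) ^ 2 ≤ 2 * exp (Y * t) := by
    nlinarith [quadratic_le_exp_of_nonneg (by positivity : 0 ≤ Y * t)]
  calc |g * (log (Y + t) + c) - (log Y + c)|
      = |g * (log (Y + t) - log Y) - (1 - g) * (log Y + c)| := by ring_nf
    _ ≤ |g * (log (Y + t) - log Y)| + |(1 - g) * (log Y + c)| := abs_sub _ _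
    _ = g * (log (Y + t) - log Y) + (1 - g) * |log Y + c| := by
        rw [abs_mul (1 - g), abs_of_nonneg (mul_nonneg hg₀.le hlog₀),
          abs_of_nonneg (sub_nonneg.2 hg₁)]
    _ ≤ 1 * (t / Y) + 2 * t ^ 2 * ((1 + |c|) * Y) := by
        gcongr
        exact log_add_sub_log_le_div hY₀ ht
    _ = (t + 2 * (1 + |c|) * (Y * t) ^ 2) / Y := by field_simp
    _ ≤ (exp (Y * t) + 2 * (1 + |c|) * (2 * exp (Y * t))) / Y := by gcongr
    _ = (5 + 4 * |c|) / Y * exp (Y * t) := by ring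

variable {J : ℝ → ℝ} {B c Y : ℝ}

lemma abs_sub_exp_mul_log_le (hY : 1 ≤ Y)
    (hJ : ∀ u ≥ Y, |J u - exp (-2 * u ^ 2) * (log u + c)| ≤ B * (exp (-2 * u ^ 2) / u))
    {t : ℝ} (ht : 0 < t) :
    |J (Y + t) - exp (-2 * Y ^ 2) * (log Y + c) * exp (-(4 * Y) * t)| ≤
      (5 + 4 * |c| + B) / Y * exp (-2 * Y ^ 2) * exp (-(3 * Y) * t) := by
  have : 0 < Y := by linarith
  have hB : 0 ≤ B :=
    nonneg_of_mul_nonneg_left ((abs_nonneg _).trans (hJ Y le_rfl)) (by positivity)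
  have hJt := hJ (Y + t) (by linarith)
  rw [exp_neg_two_mul_add_sq] at hJt
  have hshift : exp (-(3 * Y) * t) = exp (-(4 * Y) * t) * exp (Y * t) := by
    rw [← exp_add]
    congr 1
    ring
  set D := exp (-2 * Y ^ 2)
  set w := exp (-(4 * Y) * t)
  set g := exp (-2 * t ^ 2)
  have hg : g ≤ 1 := exp_le_one_iff.2 (by nlinarith)
  have hexp : 1 ≤ exp (Y * t) := one_le_exp (by positivity)
  have herror : B * (D * w * g / (Y + t)) ≤ B * (D * w * exp (Y * t) / Y) := by
    gcongr
    · exact hg.trans hexp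
    · linarith
  calc |J (Y + t) - D * (log Y + c) * w|
      = |(J (Y + t) - D * w * g * (log (Y + t) + c)) +
          D * w * (g * (log (Y + t) + c) - (log Y + c))| := by ring_nf
    _ ≤ |J (Y + t) - D * w * g * (log (Y + t) + c)| +
          |D * w * (g * (log (Y + t) + c) - (log Y + c))| := abs_add_le _ _
    _ = |J (Y + t) - D * w * g * (log (Y + t) + c)| +
          D * w * |g * (log (Y + t) + c) - (log Y + c)| := by
        rw [abs_mul (D * w), abs_of_pos (by positivity : 0 < D * w)]
    _ ≤ B * (D * w * exp (Y * t) / Y) + D * w * ((5 + 4 * |c|) / Y * exp (Y * t)) := by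
        gcongr
        · exact hJt.trans herror
        · exact abs_exp_mul_log_add_sub_le c hY ht.le
    _ = (5 + 4 * |c| + B) / Y * D * exp (-(3 * Y) * t) := by
        rw [hshift]
        ring

theorem abs_integral_sub_exp_mul_log_div_le (hY : 1 ≤ Y)
    (hJ_int : IntegrableOn (fun t => J (Y + t)) (Ioi 0))
    (hJ : ∀ u ≥ Y, |J u - exp (-2 * u ^ 2) * (log u + c)| ≤ B * (exp (-2 * u ^ 2) / u)) :
    |(∫ t in Ioi 0, J (Y + t)) - exp (-2 * Y ^ 2) * (log Y + c) / (4 * Y)| ≤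
      (5 + 4 * |c| + B) / 3 * exp (-2 * Y ^ 2) / Y ^ 2 := by
  have h4Y : 0 < 4 * Y := by linarith
  have hmain : ∫ t in Ioi 0, exp (-2 * Y ^ 2) * (log Y + c) * exp (-(4 * Y) * t) =
      exp (-2 * Y ^ 2) * (log Y + c) / (4 * Y) := by
    rw [integral_const_mul, integral_exp_neg_mul_Ioi_zero h4Y, mul_one_div]
  rw [← hmain]
  calc _ ≤ (5 + 4 * |c| + B) / Y * exp (-2 * Y ^ 2) / (3 * Y) :=
        norm_integral_Ioi_sub_integral_Ioi_le_div (by linarith) hJ_int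
          ((exp_neg_integrableOn_Ioi 0 h4Y).const_mul _) fun t ht =>
            abs_sub_exp_mul_log_le hY hJ ht
    _ = (5 + 4 * |c| + B) / 3 * exp (-2 * Y ^ 2) / Y ^ 2 := by ring

end Laplace

lemma abs_integral_integral_gapKernel_sub_le {Y : ℝ} (hY : 1 ≤ Y) :
    |(∫ t in Ioi 0, ∫ s in Ioi 0, gapKernel s (Y + t)) -
        exp (-2 * Y ^ 2) * (log Y + (eulerMascheroniConstant / 2 + log 2)) / (4 * Y)| ≤
      (6 + 4 * |eulerMascheroniConstant / 2 + log 2|) / 3 * exp (-2 * Y ^ 2) / Y ^ 2 := by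
  have hcoeff (x : ℝ) : 6 + x = 5 + x + 1 := by ring
  have hprod := integrableOn_gapKernel_prod hY
  rw [IntegrableOn, Measure.volume_eq_prod, ← Measure.prod_restrict] at hprod
  rw [hcoeff]
  refine abs_integral_sub_exp_mul_log_div_le (J := fun u => ∫ s in Ioi 0, gapKernel s u) hY
    hprod.integral_prod_right fun u hu => ?_
  rw [one_mul]
  exact abs_integral_gapKernel_sub_le (hY.trans hu)

/-- Asymptotic expansion of `A₄` as `y → −∞`, with `γ` the Euler–Mascheroni constant. -/
theorem A4_asymptotics :
    ∃ C > (0 : ℝ), ∃ y₀ < (0 : ℝ), ∀ y ≤ y₀,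
      abs (A₄ y -
          (1 / (4 * Real.sqrt (2 * Real.pi))) * (Real.log |y| / |y|) * Real.exp (-2 * y ^ 2) -
          (1 / (4 * Real.sqrt (2 * Real.pi))) * (Real.eulerMascheroniConstant / 2 + Real.log 2) *
            Real.exp (-2 * y ^ 2) / |y|) ≤
        C * Real.exp (-2 * y ^ 2) / y ^ 2 := by
  set c := eulerMascheroniConstant / 2 + log 2
  refine ⟨1 / √(2 * π) * ((6 + 4 * |c|) / 3), by positivity, -1, by norm_num, fun y hy => ?_⟩
  have hbound := abs_integral_integral_gapKernel_sub_le (le_neg_of_le_neg hy)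
  rw [neg_sq] at hbound
  rw [A₄_eq_integral_gapKernel hy, abs_of_neg (by linarith : y < 0)]
  set I := ∫ t in Ioi 0, ∫ s in Ioi 0, gapKernel s (-y + t)
  calc _ = |1 / √(2 * π) * (I - exp (-2 * y ^ 2) * (log (-y) + c) / (4 * -y))| := by ring_nf
    _ = 1 / √(2 * π) * |I - exp (-2 * y ^ 2) * (log (-y) + c) / (4 * -y)| := by
        rw [abs_mul, abs_of_pos (by positivity)]
    _ ≤ 1 / √(2 * π) * ((6 + 4 * |c|) / 3 * exp (-2 * y ^ 2) / y ^ 2) := by gcongr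
    _ = 1 / √(2 * π) * ((6 + 4 * |c|) / 3) * exp (-2 * y ^ 2) / y ^ 2 := by ring
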